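/- For every integer N ≥ 2 and every real z with |z| < 1, the Bose–Hubbard Hamiltonian H_BH(z) has N distinct real eigenvalues, namely (N−1−2k)·√(1−z²) for k = 0,…,N−1; in particular H_BH(z) is diagonalizable with purely real, simple spectrum throughout the open unitarity interval −1 < z < 1. -/

import Mathlib

open Matrix Polynomial Finset

/-- off-diagonal coupling `√((N−1−k)(k+1))`. -/
noncomputable def gCoup (N k : ℕ) : ℝ := Real.sqrt (((N - 1 - k) * (k + 1) : ℕ))

/-- the non-Hermitian Bose–Hubbard Hamiltonian `H_BH(z)`. -/
noncomputable def HBH (N : ℕ) (z : ℂ) : Matrix (Fin N) (Fin N) ℂ :=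
  fun k l =>
    if (k : ℕ) = (l : ℕ) then -Complex.I * (((N : ℤ) - 1 - 2 * (k : ℕ) : ℤ) : ℂ) * z
    else if (l : ℕ) = (k : ℕ) + 1 then (gCoup N k : ℂ)
    else if (k : ℕ) = (l : ℕ) + 1 then (gCoup N l : ℂ)
    else 0

/-- the EP limit of the discrete anharmonic-oscillator Hamiltonian `H_AO`. -/
noncomputable def HAO (N : ℕ) : Matrix (Fin N) (Fin N) ℂ :=
  fun k l =>
    if (k : ℕ) = (l : ℕ) then -(((N : ℤ) - 1 - 2 * (k : ℕ) : ℤ) : ℂ)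
    else if (l : ℕ) = (k : ℕ) + 1 then (gCoup N k : ℂ)
    else if (k : ℕ) = (l : ℕ) + 1 then -(gCoup N l : ℂ)
    else 0

/-- the nilpotent Jordan block `J`. -/
noncomputable def Jmat (N : ℕ) : Matrix (Fin N) (Fin N) ℂ :=
  fun k l => if (l : ℕ) = (k : ℕ) + 1 then 1 else 0

/-- the Pascal-triangle matrix `P`. -/
noncomputable def Pmat (N : ℕ) : Matrix (Fin N) (Fin N) ℂ :=
  fun m q => ((N - 1 - (m : ℕ)).choose (q : ℕ) : ℂ)

/-- the diagonal factor `D` with `D_{k,k} = i^k·√(binom(N−1,k))`. -/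
noncomputable def Dmat (N : ℕ) : Matrix (Fin N) (Fin N) ℂ :=
  Matrix.diagonal fun k => Complex.I ^ (k : ℕ) * (Real.sqrt ((N - 1).choose (k : ℕ)) : ℂ)

/-- the diagonal factor `G` with `G_{k,k} = (−i)^{N−1−k}·(N−1−k)!`. -/
noncomputable def Gmat (N : ℕ) : Matrix (Fin N) (Fin N) ℂ :=
  Matrix.diagonal fun k => (-Complex.I) ^ (N - 1 - (k : ℕ)) * ((N - 1 - (k : ℕ)).factorial : ℂ)

/-- the Bose–Hubbard transition matrix `Q_BH = D·P·G`. -/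
noncomputable def QBH (N : ℕ) : Matrix (Fin N) (Fin N) ℂ := Dmat N * Pmat N * Gmat N

/-- the diagonal factor `C` with `C_{k,k} = √(binom(N−1,k))`. -/
noncomputable def Cmat (N : ℕ) : Matrix (Fin N) (Fin N) ℂ :=
  Matrix.diagonal fun k => (Real.sqrt ((N - 1).choose (k : ℕ)) : ℂ)

/-- the diagonal factor `F` with `F_{k,k} = (−1)^{N−1−k}·(N−1−k)!`. -/
noncomputable def Fmat (N : ℕ) : Matrix (Fin N) (Fin N) ℂ :=
  Matrix.diagonal fun k => (-1 : ℂ) ^ (N - 1 - (k : ℕ)) * ((N - 1 - (k : ℕ)).factorial : ℂ)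

/-- the anharmonic-oscillator transition matrix `Q_AO = C·P·F`. -/
noncomputable def QAO (N : ℕ) : Matrix (Fin N) (Fin N) ℂ := Cmat N * Pmat N * Fmat N

/-- `β = −1 + i`. -/
noncomputable def betaC : ℂ := -1 + Complex.I

/-- the diagonal factor `B` with `B_{k,k} = (−β)^{−k}`. -/
noncomputable def Bmat (N : ℕ) : Matrix (Fin N) (Fin N) ℂ :=
  Matrix.diagonal fun k => ((-betaC) ^ (k : ℕ))⁻¹

/-- the diagonal factor `A` with `A_{k,k} = β^k`. -/
noncomputable def Amat (N : ℕ) : Matrix (Fin N) (Fin N) ℂ :=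
  Matrix.diagonal fun k => betaC ^ (k : ℕ)

/-- the upper-triangular real matrix `R` with
`R_{n,n+q} = √(binom(n+q,n)·binom(N−1−n,q))`. -/
noncomputable def Rmat (N : ℕ) : Matrix (Fin N) (Fin N) ℂ :=
  fun n k =>
    if (n : ℕ) ≤ (k : ℕ) then
      (Real.sqrt (((k : ℕ).choose (n : ℕ)) * ((N - 1 - (n : ℕ)).choose ((k : ℕ) - (n : ℕ)))) : ℂ)
    else 0

/-- the transition-matrix product `S = B·R·A`. -/
noncomputable def Smat (N : ℕ) : Matrix (Fin N) (Fin N) ℂ := Bmat N * Rmat N * Amat N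

/-- the discrete anharmonic-oscillator Hamiltonian `H_AO(γ)` with coupling parameter `γ`. -/
noncomputable def HAOg (N : ℕ) (γ : ℝ) : Matrix (Fin N) (Fin N) ℝ :=
  fun k l =>
    if (k : ℕ) = (l : ℕ) then -((N : ℝ) - 1 - 2 * (k : ℕ))
    else if (l : ℕ) = (k : ℕ) + 1 then
      Real.sqrt ((((N - 1 - (k : ℕ)) * ((k : ℕ) + 1) : ℕ)) * (1 - γ))
    else if (k : ℕ) = (l : ℕ) + 1 then
      -Real.sqrt ((((N - 1 - (l : ℕ)) * ((l : ℕ) + 1) : ℕ)) * (1 - γ))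
    else 0

/-- the exchange (parity) matrix `Π`. -/
noncomputable def PiMat (N : ℕ) : Matrix (Fin N) (Fin N) ℂ :=
  fun k l => if (k : ℕ) + (l : ℕ) = N - 1 then 1 else 0

/-!
Diagonal conjugation by `√(binom(N-1,k))` removes the square roots from `H_BH(z)` and turns it into
the matrix, on polynomials of degree less than `N`, of the first-order operator
`p ↦ (1 + 2iz x - x²) p' + (N - 1) (x - iz) p`. If `s² = 1 - z²` then
`1 + 2iz x - x² = (1 + (iz + s) x) (1 + (iz - s) x)`, and the products
`(1 + (iz + s) x)^(N-1-k) (1 + (iz - s) x)^k` are eigenfunctions with eigenvalues `(N - 1 - 2k) s`.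
Unless `s = 0` these are `N` distinct eigenvalues of an `N × N` matrix, which is therefore
diagonalizable and has no other eigenvalue.
-/

section Diagonalization

variable {K ι : Type*} [Field K] [Fintype ι] [DecidableEq ι]

lemma spectrum_mul_diagonal_mul_inv {T : Matrix ι ι K} (hT : IsUnit T) (d : ι → K) :
    spectrum K (T * diagonal d * T⁻¹) = Set.range d := by
  obtain ⟨u, rfl⟩ := hT
  rw [← coe_units_inv, spectrum.units_conjugate, spectrum_diagonal]

lemma exists_eq_mul_diagonal_mul_inv_of_injective {A : Matrix ι ι K} {d : ι → K}
    (hd : Function.Injective d) (hA : ∀ i, Module.End.HasEigenvalue (toLin' A) (d i)) :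
    ∃ T : Matrix ι ι K, IsUnit T ∧ A = T * diagonal d * T⁻¹ := by
  choose v hv using fun i => (hA i).exists_hasEigenvector
  have hli : LinearIndependent K v := Module.End.eigenvectors_linearIndependent' _ d hd v hv
  let T : Matrix ι ι K := (of v)ᵀ
  have hT : IsUnit T := linearIndependent_cols_iff_isUnit.mp hli
  have hAT : A * T = T * diagonal d := by
    ext i j
    have hAv : A *ᵥ v j = d j • v j := (hv j).apply_eq_smul
    rw [mul_diagonal]
    simpa [T, mul_apply, mulVec, dotProduct, mul_comm] using congrFun hAv i
  refine ⟨T, hT, ?_⟩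
  rw [← hAT, mul_nonsing_inv_cancel_right _ _ ((isUnit_iff_isUnit_det T).mp hT)]

lemma hasEigenvalue_toLin'_of_mul_eq_mul {A B P : Matrix ι ι K} (hP : IsUnit P)
    (hPA : P * A = B * P) {μ : K} (hB : Module.End.HasEigenvalue (toLin' B) μ) :
    Module.End.HasEigenvalue (toLin' A) μ := by
  obtain ⟨u, rfl⟩ := hP
  have hA : A = (↑u⁻¹ : Matrix ι ι K) * B * u := by
    rw [mul_assoc, ← hPA, Units.inv_mul_cancel_left]
  rw [Module.End.hasEigenvalue_iff_mem_spectrum, spectrum_toLin'] at hB ⊢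
  rwa [hA, spectrum.units_conjugate']

end Diagonalization

section CoeffMatrix

variable {R : Type*} [CommSemiring R]

/-- The matrix, in the monomial basis, of an operator on polynomials compressed to degree less than
`N`: column `l` holds the first `N` coefficients of `L (X ^ l)`. -/
noncomputable def coeffMatrix (N : ℕ) (L : R[X] →ₗ[R] R[X]) : Matrix (Fin N) (Fin N) R :=
  of fun k l => (L (X ^ (l : ℕ))).coeff k

lemma coeffMatrix_mulVec_toFn {N : ℕ} (L : R[X] →ₗ[R] R[X]) {p : R[X]} (hp : p.natDegree < N) :
    coeffMatrix N L *ᵥ toFn N p = toFn N (L p) := by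
  ext k
  conv_rhs => rw [p.as_sum_range_C_mul_X_pow' hp]
  simp only [← smul_eq_C_mul, map_sum, map_smul, sum_range, toFn, LinearMap.pi_apply]
  simp [coeffMatrix, mulVec, dotProduct, mul_comm]

end CoeffMatrix

section LogarithmicDerivative

variable {R : Type*} [CommSemiring R]

lemma mul_derivative_pow (f : R[X]) (m : ℕ) :
    f * derivative (f ^ m) = m * derivative f * f ^ m := by
  cases m with
  | zero => simp
  | succ m =>
    rw [derivative_pow_succ, map_add, map_natCast, map_one]
    push_cast
    ring

lemma mul_mul_derivative_pow_mul_pow (f g : R[X]) (m j : ℕ) :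
    f * g * derivative (f ^ m * g ^ j) =
      (m * derivative f * g + j * f * derivative g) * (f ^ m * g ^ j) :=
  calc f * g * derivative (f ^ m * g ^ j)
      = f * derivative (f ^ m) * (g * g ^ j) + g * derivative (g ^ j) * (f * f ^ m) := by
        rw [derivative_mul]; ring
    _ = m * derivative f * f ^ m * (g * g ^ j) + j * derivative g * g ^ j * (f * f ^ m) := by
        rw [mul_derivative_pow, mul_derivative_pow]
    _ = (m * derivative f * g + j * f * derivative g) * (f ^ m * g ^ j) := by ring

end LogarithmicDerivative

section DifferentialOperator

variable {R : Type*} [CommRing R]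

/-- The differential operator `p ↦ (1 + 2ax - x²) p' + n (x - a) p`. For `a = iz` and `n = N - 1`
it represents the Bose–Hubbard Hamiltonian on polynomials of degree less than `N`. -/
noncomputable def bhOp (n a : R) : R[X] →ₗ[R] R[X] :=
  LinearMap.mulLeft R (1 + C (2 * a) * X - X ^ 2) ∘ₗ derivative +
    LinearMap.mulLeft R (C n * (X - C a))

lemma bhOp_apply (n a : R) (p : R[X]) :
    bhOp n a p = (1 + C (2 * a) * X - X ^ 2) * derivative p + C n * (X - C a) * p :=
  rfl

lemma bhOp_X_pow (n a : R) (l : ℕ) :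
    bhOp n a (X ^ l) =
      C (l : R) * X ^ (l - 1) - C (a * (n - 2 * l)) * X ^ l + C (n - l) * X ^ (l + 1) := by
  rw [bhOp_apply]
  cases l with
  | zero =>
    simp only [pow_zero, derivative_one, Nat.cast_zero, C_0, mul_zero, sub_zero, zero_add, pow_one,
      C_mul]
    ring
  | succ l =>
    rw [derivative_X_pow, Nat.add_sub_cancel]
    simp only [C_mul, C_sub, C_ofNat]
    ring

lemma coeff_bhOp_X_pow (n a : R) (l k : ℕ) :
    (bhOp n a (X ^ l)).coeff k =
      if k = l then -a * (n - 2 * k)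
      else if l = k + 1 then (l : R)
      else if k = l + 1 then n - l
      else 0 := by
  have hpred : (C (l : R) * X ^ (l - 1)).coeff k = if l = k + 1 then (l : R) else 0 := by
    cases l with
    | zero => simp
    | succ l => simp only [coeff_C_mul_X_pow, Nat.add_sub_cancel, Nat.add_right_cancel_iff, eq_comm]
  rw [bhOp_X_pow, coeff_add, coeff_sub, hpred, coeff_C_mul_X_pow, coeff_C_mul_X_pow]
  split_ifs <;> first | omega | (subst_vars; ring)

/-- The eigenfunctions of `bhOp (m + j) a` when `s ^ 2 = 1 + a ^ 2`. -/
noncomputable def bhEigenpoly (a s : R) (m j : ℕ) : R[X] :=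
  (1 + C (a + s) * X) ^ m * (1 + C (a - s) * X) ^ j

lemma coeff_zero_bhEigenpoly (a s : R) (m j : ℕ) : (bhEigenpoly a s m j).coeff 0 = 1 := by
  simp [bhEigenpoly, coeff_zero_eq_eval_zero]

lemma natDegree_bhEigenpoly_le (a s : R) (m j : ℕ) : (bhEigenpoly a s m j).natDegree ≤ m + j := by
  unfold bhEigenpoly
  compute_degree

lemma bhOp_bhEigenpoly {a s : R} (hs : s ^ 2 = 1 + a ^ 2) (m j : ℕ) :
    bhOp (m + j : R) a (bhEigenpoly a s m j) = ((m - j) * s) • bhEigenpoly a s m j := by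
  have hC : (C s ^ 2 : R[X]) = 1 + C a ^ 2 := by rw [← C_pow, hs, C_add, C_pow, C_1]
  have hfactor : (1 + C (2 * a) * X - X ^ 2 : R[X]) =
      (1 + C (a + s) * X) * (1 + C (a - s) * X) := by
    simp only [C_mul, C_add, C_sub, C_ofNat]
    linear_combination X ^ 2 * hC
  have hderiv (b : R) : derivative (1 + C b * X) = C b := by
    rw [derivative_add, derivative_one, zero_add, derivative_C_mul_X]
  have hsymbol : (m : R[X]) * C (a + s) * (1 + C (a - s) * X) +
      (j : R[X]) * (1 + C (a + s) * X) * C (a - s) + C (m + j : R) * (X - C a) =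
        C ((m - j : R) * s) := by
    simp only [C_mul, C_add, C_sub, map_natCast]
    linear_combination -(m + j) * X * hC
  rw [bhOp_apply, hfactor, bhEigenpoly, mul_mul_derivative_pow_mul_pow, ← add_mul, smul_eq_C_mul,
    hderiv, hderiv, hsymbol]

end DifferentialOperator

lemma gCoup_eq_sqrt_mul_sqrt (N k : ℕ) :
    gCoup N k = √((N - 1 - k : ℕ) : ℝ) * √((k + 1 : ℕ) : ℝ) := by
  rw [gCoup, Nat.cast_mul, Real.sqrt_mul (Nat.cast_nonneg _)]

lemma sqrt_succ_mul_sqrt_choose_succ (n k : ℕ) :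
    √((k + 1 : ℕ) : ℝ) * √(n.choose (k + 1) : ℝ) = √((n - k : ℕ) : ℝ) * √(n.choose k : ℝ) := by
  have hchoose : (k + 1) * n.choose (k + 1) = (n - k) * n.choose k := by
    rw [mul_comm, Nat.choose_succ_right_eq, mul_comm]
  rw [← Real.sqrt_mul (Nat.cast_nonneg _), ← Real.sqrt_mul (Nat.cast_nonneg _), ← Nat.cast_mul,
    ← Nat.cast_mul, hchoose]

lemma sqrt_choose_mul_gCoup (N k : ℕ) :
    √((N - 1).choose k : ℝ) * gCoup N k = (k + 1 : ℕ) * √((N - 1).choose (k + 1) : ℝ) := by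
  rw [gCoup_eq_sqrt_mul_sqrt]
  linear_combination -√((k + 1 : ℕ) : ℝ) * sqrt_succ_mul_sqrt_choose_succ (N - 1) k +
    √((N - 1).choose (k + 1) : ℝ) * Real.mul_self_sqrt (Nat.cast_nonneg (α := ℝ) (k + 1))

lemma sqrt_choose_succ_mul_gCoup (N k : ℕ) :
    √((N - 1).choose (k + 1) : ℝ) * gCoup N k = (N - 1 - k : ℕ) * √((N - 1).choose k : ℝ) := by
  rw [gCoup_eq_sqrt_mul_sqrt]
  linear_combination √((N - 1 - k : ℕ) : ℝ) * sqrt_succ_mul_sqrt_choose_succ (N - 1) k +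
    √((N - 1).choose k : ℝ) * Real.mul_self_sqrt (Nat.cast_nonneg (α := ℝ) (N - 1 - k))

lemma isUnit_Cmat (N : ℕ) : IsUnit (Cmat N) := by
  rw [Cmat, isUnit_diagonal, Pi.isUnit_iff]
  intro k
  have hpos : 0 < (N - 1).choose k := Nat.choose_pos (by omega)
  simp [hpos.ne']

lemma Cmat_mul_HBH (N : ℕ) (z : ℂ) :
    Cmat N * HBH N z = coeffMatrix N (bhOp ((N : ℂ) - 1) (Complex.I * z)) * Cmat N := by
  ext k l
  obtain ⟨k, hk⟩ := k
  obtain ⟨l, hl⟩ := l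
  simp only [Cmat, diagonal_mul, mul_diagonal, coeffMatrix, of_apply, coeff_bhOp_X_pow, HBH]
  split_ifs with hdiag hsuper hsub
  · subst hdiag
    push_cast
    ring
  · subst hsuper
    exact_mod_cast sqrt_choose_mul_gCoup N k
  · subst hsub
    have hcast : ((N - 1 - l : ℕ) : ℂ) = N - 1 - l := by
      rw [Nat.sub_sub, Nat.cast_sub (by omega)]
      push_cast
      ring
    rw [← hcast]
    exact_mod_cast sqrt_choose_succ_mul_gCoup N l
  · simp

lemma hasEigenvalue_HBH {N : ℕ} {z s : ℂ} (hs : s ^ 2 = 1 - z ^ 2) (k : Fin N) :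
    Module.End.HasEigenvalue (toLin' (HBH N z)) (((N : ℂ) - 1 - 2 * (k : ℕ)) * s) := by
  apply hasEigenvalue_toLin'_of_mul_eq_mul (isUnit_Cmat N) (Cmat_mul_HBH N z)
  obtain ⟨m, hm⟩ : ∃ m, N = m + k + 1 := ⟨N - 1 - k, by omega⟩
  let p : ℂ[X] := bhEigenpoly (Complex.I * z) s m k
  have hN : (N : ℂ) - 1 = m + (k : ℕ) := by
    rw [sub_eq_iff_eq_add]
    exact_mod_cast hm
  have hs' : s ^ 2 = 1 + (Complex.I * z) ^ 2 := by
    rw [mul_pow, Complex.I_sq, hs]; ring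
  have hp : p.natDegree < N :=
    (natDegree_bhEigenpoly_le _ _ _ _).trans_lt (by omega)
  refine Module.End.hasEigenvalue_of_hasEigenvector (x := toFn N p)
    ⟨Module.End.mem_eigenspace_iff.mpr ?_, fun h0 => ?_⟩
  · rw [toLin'_apply, coeffMatrix_mulVec_toFn _ hp, hN, bhOp_bhEigenpoly hs', map_smul]
    congr 1
    ring
  · have hcoeff : p.coeff 0 = 0 := congrFun h0 ⟨0, by omega⟩
    rw [coeff_zero_bhEigenpoly] at hcoeff
    exact one_ne_zero hcoeff

lemma injective_sub_two_mul_mul {K : Type*} [Field K] [CharZero K] (c : K) {s : K} (hs : s ≠ 0) :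
    Function.Injective fun k : ℕ => (c - 2 * k) * s := by
  intro k l hkl
  have hsub : c - 2 * (k : K) = c - 2 * l := mul_right_cancel₀ hs hkl
  exact Nat.cast_injective (mul_left_cancel₀ two_ne_zero (sub_right_injective hsub))

theorem bh_real_simple_spectrum_general (N : ℕ) {z s : ℂ} (hs : s ^ 2 = 1 - z ^ 2)
    (hz : z ^ 2 ≠ 1) :
    Function.Injective (fun k : Fin N => ((N : ℂ) - 1 - 2 * (k : ℕ)) * s) ∧
      spectrum ℂ (HBH N z) = Set.range (fun k : Fin N => ((N : ℂ) - 1 - 2 * (k : ℕ)) * s) ∧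
      ∃ T : Matrix (Fin N) (Fin N) ℂ, IsUnit T ∧
        HBH N z = T * diagonal (fun k : Fin N => ((N : ℂ) - 1 - 2 * (k : ℕ)) * s) * T⁻¹ := by
  have hs0 : s ≠ 0 := by
    rintro rfl
    exact hz (by linear_combination hs)
  have hinj := (injective_sub_two_mul_mul ((N : ℂ) - 1) hs0).comp (Fin.val_injective (n := N))
  obtain ⟨T, hT, hH⟩ := exists_eq_mul_diagonal_mul_inv_of_injective hinj (hasEigenvalue_HBH hs)
  exact ⟨hinj, hH ▸ spectrum_mul_diagonal_mul_inv hT _, T, hT, hH⟩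

/-- for `N ≥ 2` and real `|z| < 1`, `H_BH(z)` has the `N` distinct
real eigenvalues `(N−1−2k)·√(1−z²)` and is diagonalizable. -/
theorem bh_real_simple_spectrum (N : ℕ) (hN : 2 ≤ N) (z : ℝ) (hz : |z| < 1) :
    Function.Injective
        (fun k : Fin N => ((((N : ℝ) - 1 - 2 * (k : ℕ)) * Real.sqrt (1 - z ^ 2) : ℝ) : ℂ)) ∧
      spectrum ℂ (HBH N (z : ℂ)) =
        Set.range
          (fun k : Fin N => ((((N : ℝ) - 1 - 2 * (k : ℕ)) * Real.sqrt (1 - z ^ 2) : ℝ) : ℂ)) ∧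
      ∃ (T : Matrix (Fin N) (Fin N) ℂ) (d : Fin N → ℂ),
        IsUnit T ∧ HBH N (z : ℂ) = T * Matrix.diagonal d * T⁻¹ := by
  have hz2 : z ^ 2 < 1 := (sq_lt_one_iff_abs_lt_one z).mpr hz
  have hs : ((√(1 - z ^ 2) : ℝ) : ℂ) ^ 2 = 1 - (z : ℂ) ^ 2 := by
    exact_mod_cast Real.sq_sqrt (sub_nonneg.mpr hz2.le)
  have hz1 : (z : ℂ) ^ 2 ≠ 1 := by exact_mod_cast hz2.ne
  obtain ⟨hinj, hspec, T, hT, hH⟩ := bh_real_simple_spectrum_general N hs hz1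
  push_cast
  exact ⟨hinj, hspec, T, _, hT, hH⟩
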